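/- Let k ≥ 2 be an integer and let m, n be nonnegative integers. Then ∫_{[0,∞)^k} (e₂(x))^m (e₁(x))^n e^{−e₁(x)} dx = (m! · (2m + n + k − 1)! · (k/2)_m / (2m + k − 1)!) · (2(k − 1)/k)^m · (1 + Σ_{r=1}^{k−2} Σ_{1 ≤ s_r ≤ s_{r−1} ≤ ⋯ ≤ s_1 ≤ m} ∏_{i=1}^{r} (((k − i)² − 1)^{s_i} · ((k − i)/2)_{s_i}) / ((k − i)^{2 s_i} · ((k − i + 1)/2)_{s_i})). -/

import Mathlib

open MeasureTheory Finset

/-- `e₁(x) = ∑ᵢ xᵢ` -/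
noncomputable def e1 {k : ℕ} (x : Fin k → ℝ) : ℝ := ∑ i, x i

/-- `e₂(x) = ∑_{i<j} xᵢ xⱼ` -/
noncomputable def e2 {k : ℕ} (x : Fin k → ℝ) : ℝ := ∑ i, ∑ j ∈ Finset.Ioi i, x i * x j

/-- Pochhammer symbol `(y)ₘ = ∏_{i=0}^{m-1} (y + i)` -/
noncomputable def poch (y : ℝ) (m : ℕ) : ℝ := ∏ i ∈ Finset.range m, (y + i)

/-!
Integrating a monomial `∏ xᵢ ^ aᵢ` against `exp (-e₁)` over the orthant gives `∏ aᵢ!`, so the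
integral is a linear functional `E_k` on polynomials. Euler's identity gives
`E_k (e₁ p) = (k + d) E_k p` for `p` homogeneous of degree `d`, which removes the factor `e₁ ^ n`.
Integrating `e₂ ^ (m + 1)` by parts in each variable and averaging, with `∑ ∂ᵢ e₂ = (k - 1) e₁` and
`e₂ = e₂(x₁, …, x_{k-1})` on each face, yields
`E_k (e₂ ^ (m + 1)) = (m + 1) (k - 1) (k + 2m) / k · E_k (e₂ ^ m) + E_{k-1} (e₂ ^ (m + 1))`.
Dividing by the solution `m! (k/2)ₘ (2(k - 1)/k) ^ m` of the homogeneous recurrence in `m` and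
summing turns each step `k - 1 → k` into one more summation variable `s`, whence the sum over
chains.
-/

section ExpMoment

open MvPolynomial
open scoped Nat

variable {σ : Type*} [Fintype σ] {R : Type*}

section CommSemiring

variable [CommSemiring R]

/-- The linear functional on polynomials sending the monomial `∏ Xᵢ ^ aᵢ` to `∏ aᵢ!`; over `ℝ` this
is integration against `exp (-∑ xᵢ)` over the nonnegative orthant, see `integral_eval_mul_exp_neg`.
It is defined algebraically so that its recurrences hold over any coefficients. -/
noncomputable def expMoment : MvPolynomial σ R →ₗ[R] R :=
  (basisMonomials σ R).constr R fun s => ∏ i, ((s i)! : R)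

theorem expMoment_monomial (s : σ →₀ ℕ) (c : R) :
    expMoment (monomial s c) = c * ∏ i, ((s i)! : R) := by
  have h : monomial s c = c • basisMonomials σ R s := by
    simp only [coe_basisMonomials, smul_monomial, smul_eq_mul, mul_one]
  rw [h, map_smul, expMoment, Module.Basis.constr_basis, smul_eq_mul]

theorem expMoment_one : expMoment (1 : MvPolynomial σ R) = 1 := by
  simpa using expMoment_monomial (0 : σ →₀ ℕ) (1 : R)

theorem prod_factorial_single_add (i : σ) (s : σ →₀ ℕ) :
    ∏ j, ((Finsupp.single i 1 + s : σ →₀ ℕ) j)! = (s i + 1) * ∏ j, (s j)! := by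
  classical
  have h (j : σ) : ((Finsupp.single i 1 + s : σ →₀ ℕ) j)! =
      (if j = i then s i + 1 else 1) * (s j)! := by
    split_ifs with hj
    · rw [hj, Finsupp.add_apply, Finsupp.single_eq_same, add_comm, Nat.factorial_succ]
    · rw [Finsupp.add_apply, Finsupp.single_eq_of_ne hj, zero_add, one_mul]
  simp only [h, Finset.prod_mul_distrib, Finset.prod_ite_eq', Finset.mem_univ, if_true]

theorem expMoment_X_mul (i : σ) (p : MvPolynomial σ R) :
    expMoment (X i * p) = expMoment p + expMoment (X i * pderiv i p) := by
  induction p using MvPolynomial.induction_on' with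
  | monomial s c =>
    rw [X_mul_pderiv_monomial, map_nsmul, X, monomial_mul, one_mul, expMoment_monomial,
      expMoment_monomial, ← Nat.cast_prod, prod_factorial_single_add]
    push_cast
    rw [nsmul_eq_mul]
    ring
  | add p q hp hq =>
    simp only [map_add, mul_add, hp, hq]
    ring

theorem expMoment_sum_X_mul {d : ℕ} {p : MvPolynomial σ R} (hp : p.IsHomogeneous d) :
    expMoment ((∑ i, X i) * p) = (Fintype.card σ + d : ℕ) * expMoment p := by
  calc expMoment ((∑ i, X i) * p)
    _ = ∑ _i : σ, expMoment p + expMoment (∑ i, X i * pderiv i p) := by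
      simp only [Finset.sum_mul, map_sum, expMoment_X_mul _ p, Finset.sum_add_distrib]
    _ = (Fintype.card σ + d : ℕ) * expMoment p := by
      rw [hp.sum_X_mul_pderiv, map_nsmul, Finset.sum_const, Finset.card_univ, ← add_nsmul,
        nsmul_eq_mul]

theorem expMoment_sum_X_pow_mul {d : ℕ} {p : MvPolynomial σ R} (hp : p.IsHomogeneous d) (n : ℕ) :
    expMoment ((∑ i, X i) ^ n * p) = (Fintype.card σ + d).ascFactorial n * expMoment p := by
  induction n with
  | zero => simp
  | succ n ih =>
    have hsum : (∑ i, X i : MvPolynomial σ R).IsHomogeneous 1 :=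
      IsHomogeneous.sum _ _ 1 fun i _ => isHomogeneous_X R i
    rw [pow_succ', mul_assoc, expMoment_sum_X_mul ((hsum.pow n).mul hp), ih, ← mul_assoc,
      ← Nat.cast_mul, Nat.ascFactorial_succ]
    congr 3
    ring

theorem killCompl_succAbove_X_self {n : ℕ} (i : Fin (n + 1)) :
    killCompl (R := R) i.succAbove_right_injective (X i) = 0 := by
  rw [killCompl, aeval_X, dif_neg (by simp)]

-- Integration by parts in the variable `xᵢ`: the boundary term lives on the face `xᵢ = 0`.
theorem expMoment_eq_pderiv_add_killCompl {n : ℕ} (i : Fin (n + 1))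
    (p : MvPolynomial (Fin (n + 1)) R) :
    expMoment p =
      expMoment (pderiv i p) + expMoment (killCompl i.succAbove_right_injective p) := by
  induction p using MvPolynomial.induction_on' with
  | monomial s c =>
    rw [pderiv_monomial, expMoment_monomial, expMoment_monomial, i.prod_univ_succAbove,
      i.prod_univ_succAbove]
    rcases hs : s i with _ | a
    · have hsupp : (s.support : Set (Fin (n + 1))) ⊆ Set.range i.succAbove := by
        intro j hj
        rw [Fin.range_succAbove]
        rintro rfl
        exact Finsupp.mem_support_iff.mp hj hs
      rw [killCompl_monomial_eq_monomial_comapDomain_of_subset _ c hsupp, expMoment_monomial]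
      simp
    · have hi : i ∈ s.support := Finsupp.mem_support_iff.mpr (by rw [hs]; exact a.succ_ne_zero)
      rw [killCompl_monomial_eq_zero_of_notMem_range _ c hi (by simp), map_zero, add_zero,
        Nat.factorial_succ]
      simp [hs, mul_assoc]
  | add p q hp hq =>
    simp only [map_add, hp, hq]
    ring

theorem multiset_esymm_cons (a : R) (s : Multiset R) (d : ℕ) :
    (a ::ₘ s).esymm (d + 1) = a * s.esymm d + s.esymm (d + 1) := by
  simp only [Multiset.esymm, Multiset.powersetCard_cons, Multiset.map_add, Multiset.sum_add,
    Multiset.map_map, Function.comp_def, Multiset.prod_cons, Multiset.sum_map_mul_left]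
  exact add_comm _ _

theorem esymm_fin_succ {n : ℕ} (i : Fin (n + 1)) (d : ℕ) :
    esymm (Fin (n + 1)) R (d + 1) =
      X i * rename i.succAbove (esymm (Fin n) R d) +
        rename i.succAbove (esymm (Fin n) R (d + 1)) := by
  have hrename (e : ℕ) : rename i.succAbove (esymm (Fin n) R e) =
      (Finset.univ.val.map fun j =>
        (X (i.succAbove j) : MvPolynomial (Fin (n + 1)) R)).esymm e := by
    rw [rename_eq_aeval, aeval_esymm_eq_multiset_esymm]
    rfl
  rw [hrename, hrename, ← multiset_esymm_cons, esymm_eq_multiset_esymm, Fin.univ_succAbove n i,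
    Finset.cons_val, Multiset.map_cons, Finset.map_val, Multiset.map_map]
  rfl

theorem esymm_eq_zero {d : ℕ} (hd : Fintype.card σ < d) : esymm σ R d = 0 := by
  rw [esymm, Finset.powersetCard_eq_empty.mpr (by rwa [Finset.card_univ]), Finset.sum_empty]

theorem isHomogeneous_esymm (d : ℕ) : (esymm σ R d).IsHomogeneous d := by
  refine IsHomogeneous.sum _ _ d fun t ht => ?_
  simpa [(Finset.mem_powersetCard.mp ht).2] using
    IsHomogeneous.prod t X (fun _ => 1) fun i _ => isHomogeneous_X R i

theorem killCompl_succAbove_esymm {n : ℕ} (i : Fin (n + 1)) (d : ℕ) :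
    killCompl i.succAbove_right_injective (esymm (Fin (n + 1)) R d) = esymm (Fin n) R d := by
  cases d with
  | zero => rw [esymm_zero, esymm_zero, map_one]
  | succ d =>
    rw [esymm_fin_succ i, map_add, map_mul, killCompl_succAbove_X_self, zero_mul, zero_add,
      killCompl_rename_app]

theorem pderiv_rename_succAbove {n : ℕ} (i : Fin (n + 1)) (p : MvPolynomial (Fin n) R) :
    pderiv i (rename i.succAbove p) = 0 := by
  classical
  refine pderiv_eq_zero_of_notMem_vars fun hi => ?_
  obtain ⟨j, _, hj⟩ := Finset.mem_image.mp (vars_rename i.succAbove p hi)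
  exact Fin.succAbove_ne i j hj

theorem pderiv_esymm_succ {n : ℕ} (i : Fin (n + 1)) (d : ℕ) :
    pderiv i (esymm (Fin (n + 1)) R (d + 1)) = rename i.succAbove (esymm (Fin n) R d) := by
  rw [esymm_fin_succ i, map_add, pderiv_mul, pderiv_rename_succAbove, pderiv_rename_succAbove,
    pderiv_X_self, one_mul, mul_zero, add_zero, add_zero]

theorem esymm_eq_X_mul_pderiv_add {n : ℕ} (i : Fin (n + 1)) (d : ℕ) :
    esymm (Fin (n + 1)) R d =
      X i * pderiv i (esymm (Fin (n + 1)) R d) + pderiv i (esymm (Fin (n + 1)) R (d + 1)) := by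
  rw [pderiv_esymm_succ]
  cases d with
  | zero => simp only [esymm_zero, map_one, pderiv_one, mul_zero, zero_add]
  | succ d => rw [pderiv_esymm_succ, ← esymm_fin_succ]

theorem eval_esymm_two {k : ℕ} (x : Fin k → R) :
    eval x (esymm (Fin k) R 2) = ∑ i, ∑ j ∈ Finset.Ioi i, x i * x j := by
  induction k with
  | zero => rw [esymm_eq_zero (by simp), map_zero, Finset.univ_eq_empty, Finset.sum_empty]
  | succ k ih =>
    rw [esymm_fin_succ 0, esymm_one, map_add, map_mul, eval_X, eval_rename, eval_rename, ih]
    simp [Fin.sum_univ_succ, Finset.mul_sum, Fin.Ioi_zero_eq_map, -Fin.map_succEmb_Ioi]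

end CommSemiring

theorem sum_pderiv_esymm_succ [CommRing R] (n d : ℕ) :
    ∑ i, pderiv i (esymm (Fin (n + 1)) R (d + 1)) =
      (n + 1 - d) * esymm (Fin (n + 1)) R d := by
  have hsum : ∑ _i : Fin (n + 1), esymm (Fin (n + 1)) R d = d • esymm (Fin (n + 1)) R d +
      ∑ i, pderiv i (esymm (Fin (n + 1)) R (d + 1)) := by
    rw [← (isHomogeneous_esymm d).sum_X_mul_pderiv, ← Finset.sum_add_distrib]
    exact Finset.sum_congr rfl fun i _ => esymm_eq_X_mul_pderiv_add i d
  rw [Finset.sum_const, Finset.card_univ, Fintype.card_fin, nsmul_eq_mul, nsmul_eq_mul] at hsum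
  push_cast at hsum
  linear_combination -hsum

theorem expMoment_esymm_two_pow_succ [CommRing R] (n m : ℕ) :
    (n + 1) * expMoment (esymm (Fin (n + 1)) R 2 ^ (m + 1)) =
      (m + 1) * n * (n + 1 + 2 * m) * expMoment (esymm (Fin (n + 1)) R 2 ^ m) +
        (n + 1) * expMoment (esymm (Fin n) R 2 ^ (m + 1)) := by
  set e₂ := esymm (Fin (n + 1)) R 2 with he₂
  have hpderiv : ∑ i, pderiv i (e₂ ^ (m + 1)) =
      ((m + 1 : R) * n) • ((∑ i, X i) * e₂ ^ m) := by
    have hsum : ∑ i, pderiv i e₂ = (n : R) • ∑ i, X i := by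
      rw [he₂, sum_pderiv_esymm_succ, esymm_one, Nat.cast_one, add_sub_cancel_right,
        Nat.cast_smul_eq_nsmul, nsmul_eq_mul]
    simp only [pderiv_pow, Nat.add_sub_cancel, ← Finset.mul_sum, hsum, smul_eq_C_mul,
      map_mul, map_add, map_natCast, map_one]
    push_cast
    ring
  calc (n + 1) * expMoment (e₂ ^ (m + 1))
    _ = ∑ _i : Fin (n + 1), expMoment (e₂ ^ (m + 1)) := by simp
    _ = ∑ i, (expMoment (pderiv i (e₂ ^ (m + 1))) + expMoment (esymm (Fin n) R 2 ^ (m + 1))) := by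
      refine Finset.sum_congr rfl fun i _ => ?_
      rw [expMoment_eq_pderiv_add_killCompl i, map_pow (killCompl _), killCompl_succAbove_esymm]
    _ = expMoment (((m + 1 : R) * n) • ((∑ i, X i) * e₂ ^ m)) +
        (n + 1) * expMoment (esymm (Fin n) R 2 ^ (m + 1)) := by
      rw [Finset.sum_add_distrib, ← map_sum, hpderiv]
      simp
    _ = (m + 1) * n * (n + 1 + 2 * m) * expMoment (e₂ ^ m) +
        (n + 1) * expMoment (esymm (Fin n) R 2 ^ (m + 1)) := by
      rw [map_smul, expMoment_sum_X_mul ((isHomogeneous_esymm 2).pow m), Fintype.card_fin,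
        smul_eq_mul]
      push_cast
      ring

theorem integrableOn_pow_mul_exp_neg (n : ℕ) :
    IntegrableOn (fun t : ℝ => t ^ n * Real.exp (-t)) (Set.Ici 0) := by
  rw [integrableOn_Ici_iff_integrableOn_Ioi]
  refine (Real.GammaIntegral_convergent (s := n + 1) (by positivity)).congr_fun
    (fun t _ => ?_) measurableSet_Ioi
  simp only [add_sub_cancel_right, Real.rpow_natCast, mul_comm]

theorem integral_pow_mul_exp_neg (n : ℕ) :
    ∫ t in Set.Ici (0 : ℝ), t ^ n * Real.exp (-t) = n ! := by
  rw [integral_Ici_eq_integral_Ioi, ← Real.Gamma_nat_eq_factorial,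
    Real.Gamma_eq_integral (by positivity)]
  refine setIntegral_congr_fun measurableSet_Ioi fun t _ => ?_
  simp only [add_sub_cancel_right, Real.rpow_natCast, mul_comm]

theorem eval_monomial_mul_exp_neg (s : σ →₀ ℕ) (c : ℝ) (x : σ → ℝ) :
    eval x (monomial s c) * Real.exp (-∑ i, x i) = c * ∏ i, (x i ^ s i * Real.exp (-x i)) := by
  rw [eval_monomial, Finsupp.prod_fintype _ _ fun _ => pow_zero _, Finset.prod_mul_distrib,
    ← Real.exp_sum, Finset.sum_neg_distrib, mul_assoc]

theorem integrableOn_eval_mul_exp_neg (p : MvPolynomial σ ℝ) :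
    IntegrableOn (fun x : σ → ℝ => eval x p * Real.exp (-∑ i, x i))
      (Set.univ.pi fun _ => Set.Ici 0) := by
  induction p using MvPolynomial.induction_on' with
  | monomial s c =>
    simp only [eval_monomial_mul_exp_neg]
    refine Integrable.const_mul ?_ c
    rw [volume_pi, Measure.restrict_pi_pi]
    exact Integrable.fintype_prod fun i => integrableOn_pow_mul_exp_neg (s i)
  | add p q hp hq =>
    simp only [map_add, add_mul]
    exact hp.add hq

theorem integral_eval_mul_exp_neg (p : MvPolynomial σ ℝ) :
    ∫ x : σ → ℝ in Set.univ.pi fun _ => Set.Ici 0, eval x p * Real.exp (-∑ i, x i) =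
      expMoment p := by
  induction p using MvPolynomial.induction_on' with
  | monomial s c =>
    simp only [eval_monomial_mul_exp_neg]
    rw [integral_const_mul, volume_pi, Measure.restrict_pi_pi,
      integral_fintype_prod_eq_prod fun i (t : ℝ) => t ^ s i * Real.exp (-t), expMoment_monomial]
    simp only [integral_pow_mul_exp_neg]
  | add p q hp hq =>
    simp only [map_add, add_mul]
    rw [integral_add (integrableOn_eval_mul_exp_neg p) (integrableOn_eval_mul_exp_neg q), hp, hq]

end ExpMoment

section Chains

/-- The chains `m ≥ s₀ ≥ ⋯ ≥ s_{r-1} ≥ 1` over which the inner sum of the formula runs. -/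
def chains (r m : ℕ) : Finset (Fin r → ℕ) :=
  (Fintype.piFinset fun _ : Fin r => Finset.Icc 1 m).filter fun s => ∀ i j, i ≤ j → s j ≤ s i

theorem cons_mem_chains {r m a : ℕ} {s : Fin r → ℕ} :
    (Fin.cons a s : Fin (r + 1) → ℕ) ∈ chains (r + 1) m ↔ a ∈ Finset.Icc 1 m ∧ s ∈ chains r a := by
  simp only [chains, Fin.forall_fin_succ, nonpos_iff_eq_zero, Std.le_refl, imp_self, zero_le,
    forall_const, true_and, Fin.succ_ne_zero, IsEmpty.forall_iff, Fin.succ_le_succ_iff, mem_filter,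
    Fintype.mem_piFinset, mem_Icc, Fin.cons_zero, Fin.cons_succ]
  exact ⟨fun ⟨⟨ha, hs⟩, hle, hanti⟩ => ⟨ha, fun i => ⟨(hs i).1, hle i⟩, hanti⟩,
    fun ⟨ha, hs, hanti⟩ => ⟨⟨ha, fun i => ⟨(hs i).1, (hs i).2.trans ha.2⟩⟩,
      fun i => (hs i).2, hanti⟩⟩

theorem sum_chains_succ {M : Type*} [AddCommMonoid M] (r m : ℕ) (f : (Fin (r + 1) → ℕ) → M) :
    ∑ s ∈ chains (r + 1) m, f s =
      ∑ a ∈ Finset.Icc 1 m, ∑ s ∈ chains r a, f (Fin.cons a s) := by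
  rw [Finset.sum_sigma']
  refine Finset.sum_bij' (fun s _ => ⟨s 0, Fin.tail s⟩) (fun t _ => Fin.cons t.1 t.2)
    (fun s hs => ?_) (fun t ht => ?_) (fun s _ => Fin.cons_self_tail s) (fun t _ => rfl)
    (fun s _ => by rw [Fin.cons_self_tail])
  · rw [← Fin.cons_self_tail s, cons_mem_chains] at hs
    exact Finset.mem_sigma.mpr hs
  · exact cons_mem_chains.mpr (Finset.mem_sigma.mp ht)

variable {R : Type*} [CommSemiring R]

theorem sum_chains_zero (w : ℕ → ℕ → R) (m : ℕ) :
    ∑ s ∈ chains 0 m, ∏ i : Fin 0, w i (s i) = 1 := by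
  simp [chains]

/-- The sum over all chains `m ≥ s₀ ≥ ⋯ ≥ s_{r-1} ≥ 1` of length `r ≤ N`, the empty one included,
of the weights `∏ w i sᵢ`. -/
def chainSum (w : ℕ → ℕ → R) (N m : ℕ) : R :=
  ∑ r ∈ Finset.range (N + 1), ∑ s ∈ chains r m, ∏ i : Fin r, w i (s i)

theorem chainSum_eq_one_add (w : ℕ → ℕ → R) (N m : ℕ) :
    chainSum w N m =
      1 + ∑ r ∈ Finset.Icc 1 N, ∑ s ∈ chains r m, ∏ i : Fin r, w i (s i) := by
  rw [chainSum, Finset.range_eq_Ico, Finset.sum_eq_sum_Ico_succ_bot N.succ_pos, sum_chains_zero]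
  rfl

theorem chainSum_zero_length (w : ℕ → ℕ → R) (m : ℕ) : chainSum w 0 m = 1 := by
  simp [chainSum_eq_one_add]

theorem chainSum_succ_length (w : ℕ → ℕ → R) (N m : ℕ) :
    chainSum w (N + 1) m =
      1 + ∑ a ∈ Finset.Icc 1 m, w 0 a * chainSum (fun i => w (i + 1)) N a := by
  rw [chainSum, Finset.sum_range_succ', sum_chains_zero, add_comm]
  simp only [chainSum, sum_chains_succ, Fin.prod_univ_succ, Fin.cons_zero, Fin.cons_succ,
    Fin.val_zero, Fin.val_succ, Finset.mul_sum]
  rw [Finset.sum_comm]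

end Chains

theorem poch_succ (y : ℝ) (m : ℕ) : poch y (m + 1) = poch y m * (y + m) :=
  Finset.prod_range_succ _ _

theorem poch_pos {y : ℝ} (hy : 0 < y) (m : ℕ) : 0 < poch y m :=
  Finset.prod_pos fun _ _ => by positivity

/-- The factor `((j² - 1) ^ s (j/2)ₛ) / (j ^ (2s) ((j+1)/2)ₛ)` of the formula, where `j` stands for
`k - i`. -/
noncomputable def chainWeight (j s : ℕ) : ℝ :=
  ((j ^ 2 - 1 : ℕ) : ℝ) ^ s * poch ((j : ℝ) / 2) s /
    ((j : ℝ) ^ (2 * s) * poch (((j + 1 : ℕ) : ℝ) / 2) s)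

/-- The bracketed factor of the formula for `k` variables. -/
noncomputable def chainFactor (k m : ℕ) : ℝ :=
  chainSum (fun i => chainWeight (k - (i + 1))) (k - 2) m

/-- The factor `m! (k/2)ₘ (2(k - 1)/k) ^ m` of the formula. As a function of `m` it solves the
homogeneous part of the recurrence `expMoment_esymm_two_pow_succ`. -/
noncomputable def momentScale (k m : ℕ) : ℝ :=
  m.factorial * poch ((k : ℝ) / 2) m * (2 * ((k : ℝ) - 1) / k) ^ m

theorem momentScale_zero (k : ℕ) : momentScale k 0 = 1 := by
  simp [momentScale, poch]

theorem momentScale_succ (k m : ℕ) :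
    momentScale k (m + 1) = (m + 1) * (k - 1) * (k + 2 * m) / k * momentScale k m := by
  rw [momentScale, momentScale, poch_succ, Nat.factorial_succ, pow_succ]
  push_cast
  ring

theorem momentScale_one_succ (m : ℕ) : momentScale 1 (m + 1) = 0 := by
  simp [momentScale]

theorem momentScale_mul_chainWeight {k : ℕ} (hk : 1 ≤ k) (m : ℕ) :
    momentScale (k + 1) m * chainWeight k m = momentScale k m := by
  have hpoch : poch (((k + 1 : ℕ) : ℝ) / 2) m ≠ 0 := (poch_pos (by positivity) m).ne'
  have hcast : ((k ^ 2 - 1 : ℕ) : ℝ) = (k + 1) * (k - 1) := by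
    rw [Nat.cast_sub (Nat.one_le_pow _ _ hk)]
    push_cast
    ring
  have hpow : (2 * ((k + 1 : ℕ) - 1 : ℝ) / (k + 1 : ℕ)) ^ m * ((k + 1 : ℝ) * (k - 1)) ^ m =
      (2 * ((k : ℝ) - 1) / k) ^ m * (k : ℝ) ^ (2 * m) := by
    rw [pow_mul, ← mul_pow, ← mul_pow]
    congr 1
    push_cast
    field_simp
    ring
  rw [momentScale, momentScale, chainWeight, hcast, mul_div_assoc', div_eq_iff (by positivity)]
  linear_combination (m.factorial * poch (((k + 1 : ℕ) : ℝ) / 2) m * poch ((k : ℝ) / 2) m) * hpow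

theorem chainFactor_one (m : ℕ) : chainFactor 1 m = 1 :=
  chainSum_zero_length _ m

theorem chainFactor_succ {k : ℕ} (hk : 1 ≤ k) (m : ℕ) :
    chainFactor (k + 1) m = 1 + ∑ a ∈ Finset.Icc 1 m, chainWeight k a * chainFactor k a := by
  rcases hk.eq_or_lt with rfl | hk
  · have h : ∀ a ∈ Finset.Icc 1 m, chainWeight 1 a * chainFactor 1 a = 0 := fun a ha => by
      simp [chainWeight, Nat.one_le_iff_ne_zero.mp (Finset.mem_Icc.mp ha).1]
    rw [Finset.sum_eq_zero h, add_zero]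
    exact chainSum_zero_length _ m
  · obtain ⟨N, rfl⟩ := Nat.exists_eq_add_of_le' hk
    rw [chainFactor, show N + 1 + 1 + 1 - 2 = N + 1 by omega, chainSum_succ_length]
    simp [chainFactor]

theorem chainFactor_succ_succ {k : ℕ} (hk : 1 ≤ k) (m : ℕ) :
    chainFactor (k + 1) (m + 1) =
      chainFactor (k + 1) m + chainWeight k (m + 1) * chainFactor k (m + 1) := by
  rw [chainFactor_succ hk, chainFactor_succ hk, Finset.sum_Icc_succ_top (by omega), add_assoc]

theorem expMoment_esymm_two_pow {k : ℕ} (hk : 1 ≤ k) (m : ℕ) :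
    expMoment (MvPolynomial.esymm (Fin k) ℝ 2 ^ m) = momentScale k m * chainFactor k m := by
  induction k, hk using Nat.le_induction generalizing m with
  | base =>
    cases m with
    | zero => rw [pow_zero, expMoment_one, momentScale_zero, chainFactor_one, one_mul]
    | succ m =>
      rw [esymm_eq_zero (by simp), zero_pow m.succ_ne_zero, map_zero, momentScale_one_succ,
        zero_mul]
  | succ k hk ihk =>
    induction m with
    | zero => simp [expMoment_one, momentScale_zero, chainFactor_succ hk]
    | succ m ihm =>
      have hrec := expMoment_esymm_two_pow_succ (R := ℝ) k m
      rw [ihm, ihk, ← momentScale_mul_chainWeight hk] at hrec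
      have hk₀ : (k + 1 : ℝ) ≠ 0 := by positivity
      rw [chainFactor_succ_succ hk]
      apply mul_left_cancel₀ hk₀
      rw [hrec, momentScale_succ]
      push_cast
      field_simp
      ring

theorem stmt1 (k : ℕ) (hk : 2 ≤ k) (m n : ℕ) :
    ∫ x : Fin k → ℝ in Set.univ.pi fun _ => Set.Ici (0 : ℝ),
        e2 x ^ m * e1 x ^ n * Real.exp (-(e1 x)) =
      (m.factorial : ℝ) * ((2 * m + n + k - 1).factorial : ℝ) * poch ((k : ℝ) / 2) m /
          ((2 * m + k - 1).factorial : ℝ) *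
        (2 * ((k : ℝ) - 1) / k) ^ m *
        (1 + ∑ r ∈ Finset.Icc 1 (k - 2),
          ∑ s ∈ (Fintype.piFinset fun _ : Fin r => Finset.Icc 1 m).filter
              (fun s => ∀ i j : Fin r, i ≤ j → s j ≤ s i),
            ∏ i : Fin r,
              (((k - (i.val + 1)) ^ 2 - 1 : ℕ) : ℝ) ^ s i *
                  poch (((k - (i.val + 1) : ℕ) : ℝ) / 2) (s i) /
                (((k - (i.val + 1) : ℕ) : ℝ) ^ (2 * s i) *
                  poch (((k - (i.val + 1) + 1 : ℕ) : ℝ) / 2) (s i))) := by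
  have hmoment : ∫ x : Fin k → ℝ in Set.univ.pi fun _ => Set.Ici (0 : ℝ),
      e2 x ^ m * e1 x ^ n * Real.exp (-(e1 x)) =
      expMoment ((∑ i, MvPolynomial.X i) ^ n * MvPolynomial.esymm (Fin k) ℝ 2 ^ m) := by
    rw [← integral_eval_mul_exp_neg]
    simp only [map_mul, map_pow, map_sum, MvPolynomial.eval_X, eval_esymm_two, e1, e2, mul_comm]
  have hfactorial : (((2 * m + k - 1).factorial : ℕ) : ℝ) * (k + 2 * m).ascFactorial n =
      (2 * m + n + k - 1).factorial := by
    have h := Nat.factorial_mul_ascFactorial' (k + 2 * m) n (by omega)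
    rw [← Nat.cast_mul, show 2 * m + k - 1 = k + 2 * m - 1 by omega, h,
      show 2 * m + n + k - 1 = k + 2 * m + n - 1 by omega]
  rw [hmoment, expMoment_sum_X_pow_mul ((isHomogeneous_esymm 2).pow m), Fintype.card_fin,
    expMoment_esymm_two_pow (by omega), ← hfactorial, chainFactor, chainSum_eq_one_add, momentScale]
  simp only [chainWeight, chains]
  field_simp
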